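/- Fix c = 3. Let T ≥ 2, k ≥ 1 and 1 ≤ ℓ ≤ k be integers, let μ* ∈ (0, 1] be real, let m_1, …, m_ℓ be positive integers with ∑_{i=1}^ℓ m_i ≤ T, and let n_1, …, n_ℓ be positive integers with n_i ≥ m_i and μ*·n_i ≥ 64·c²·log T for every i. Then ∏_{i=1}^ℓ (1 − 4c√(log T/(μ*·n_i)))^{m_i/T} ≥ 1 − 8c√(k·log T/(μ*·T)). (The key deterministic product inequality in the Phase 2 analysis of Lemma 4.2 for the Modified NCB algorithm, combining the numeric inequality (1−x)^a ≥ 1−2ax with the Cauchy–Schwarz inequality.) -/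

import Mathlib

/-- A linear lower bound for the real power `(1 - x) ^ a`, valid for `x ≤ 1 / 2`. -/
theorem one_sub_two_mul_le_one_sub_rpow {x a : ℝ} (hx0 : 0 ≤ x) (hx : x ≤ 1 / 2)
    (ha0 : 0 ≤ a) (ha1 : a ≤ 1) : 1 - 2 * a * x ≤ (1 - x) ^ a := by
  have hbase : (1 + 2 * x)⁻¹ ≤ 1 - x := by
    rw [inv_le_iff_one_le_mul₀ (by linarith)]
    nlinarith
  have hbernoulli : (1 + 2 * x) ^ a ≤ 1 + a * (2 * x) :=
    rpow_one_add_le_one_add_mul_self (by linarith) ha0 ha1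
  have hax : 0 ≤ a * x := mul_nonneg ha0 hx0
  calc 1 - 2 * a * x ≤ (1 + a * (2 * x))⁻¹ := by
        rw [← one_div, le_div_iff₀ (by positivity)]
        nlinarith [sq_nonneg (a * x)]
    _ ≤ ((1 + 2 * x) ^ a)⁻¹ := inv_anti₀ (by positivity) hbernoulli
    _ = ((1 + 2 * x)⁻¹) ^ a := (Real.inv_rpow (by positivity) a).symm
    _ ≤ (1 - x) ^ a := Real.rpow_le_rpow (by positivity) hbase ha0

/-- The Weierstrass product inequality. -/
theorem one_sub_sum_le_prod_one_sub {ι : Type*} {s : Finset ι} {f : ι → ℝ}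
    (hf0 : ∀ i ∈ s, 0 ≤ f i) (hf1 : ∀ i ∈ s, f i ≤ 1) :
    1 - ∑ i ∈ s, f i ≤ ∏ i ∈ s, (1 - f i) := by
  classical
  induction s using Finset.induction_on with
  | empty => simp
  | insert a s ha ih =>
    simp only [Finset.forall_mem_insert] at hf0 hf1
    rw [Finset.sum_insert ha, Finset.prod_insert ha]
    have hstep := mul_le_mul_of_nonneg_left (ih hf0.2 hf1.2) (sub_nonneg.2 hf1.1)
    have hsum := mul_nonneg hf0.1 (Finset.sum_nonneg hf0.2)
    linarith

/-- A Cauchy–Schwarz bound for `∑ i, m i * √(r / n i)` when `m ≤ n`. -/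
theorem sum_mul_sqrt_div_le {ι : Type*} [Fintype ι] {m n : ι → ℝ} {r : ℝ} (hr : 0 ≤ r)
    (hm : ∀ i, 0 ≤ m i) (hn : ∀ i, 0 < n i) (hmn : ∀ i, m i ≤ n i) :
    ∑ i, m i * √(r / n i) ≤ √(Fintype.card ι * (r * ∑ i, m i)) := by
  apply Real.le_sqrt_of_sq_le
  refine sq_sum_le_card_mul_sum_sq.trans ?_
  rw [Finset.card_univ, Finset.mul_sum _ _ r]
  gcongr with i
  rw [mul_pow, Real.sq_sqrt (div_nonneg hr (hn i).le), mul_div_assoc', div_le_iff₀ (hn i)]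
  nlinarith [mul_le_mul_of_nonneg_left (hmn i) (mul_nonneg hr (hm i))]

/-- The key deterministic product inequality in the Phase 2 analysis of Lemma 4.2
(with `c = 3`): if `ℓ ≤ k`, `∑ m_i ≤ T`, `n_i ≥ m_i` and `μ* n_i ≥ 64 c² log T` for every
`i`, then `∏_i (1 − 4c√(log T/(μ* n_i)))^(m_i/T) ≥ 1 − 8c√(k log T/(μ* T))`.
Here `^` denotes the real power `Real.rpow`. -/
theorem modified_phase_two_product_bound (c : ℝ) (hc : c = 3)
    (T k ℓ : ℕ) (hT : 2 ≤ T) (hk : 1 ≤ k) (hℓ1 : 1 ≤ ℓ) (hℓk : ℓ ≤ k)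
    (μstar : ℝ) (hμs0 : 0 < μstar) (hμs1 : μstar ≤ 1)
    (m n : Fin ℓ → ℕ)
    (hm : ∀ i, 0 < m i) (hsum : ∑ i, m i ≤ T)
    (hn : ∀ i, 0 < n i) (hnm : ∀ i, m i ≤ n i)
    (hμn : ∀ i, μstar * n i ≥ 64 * c ^ 2 * Real.log T) :
    ∏ i, (1 - 4 * c * Real.sqrt (Real.log T / (μstar * n i))) ^ ((m i : ℝ) / T) ≥
      1 - 8 * c * Real.sqrt ((k : ℝ) * Real.log T / (μstar * T)) := by
  have hT0 : (0 : ℝ) < T := by exact_mod_cast (by omega : 0 < T)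
  have hlog : 0 ≤ Real.log T := Real.log_natCast_nonneg T
  have hn0 : ∀ i, (0 : ℝ) < n i := fun i => by exact_mod_cast hn i
  have hmT : ∀ i, (m i : ℝ) / T ≤ 1 := fun i => by
    rw [div_le_one hT0]
    exact_mod_cast (Finset.single_le_sum (fun j _ => Nat.zero_le (m j))
      (Finset.mem_univ i)).trans hsum
  have hx : ∀ i, 4 * c * √(Real.log T / (μstar * n i)) ≤ 1 / 2 := fun i => by
    have hroot : √(Real.log T / (μstar * n i)) ≤ 1 / 24 := by
      rw [Real.sqrt_le_left (by norm_num), div_le_iff₀ (mul_pos hμs0 (hn0 i))]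
      have := hμn i
      rw [hc] at this
      linarith
    rw [hc]
    linarith
  have hx0 : ∀ i, 0 ≤ 4 * c * √(Real.log T / (μstar * n i)) := fun i => by
    rw [hc]
    positivity
  have hle1 : ∀ i, 2 * ((m i : ℝ) / T) * (4 * c * √(Real.log T / (μstar * n i))) ≤ 1 := fun i => by
    have := mul_le_mul (hmT i) (hx i) (hx0 i) zero_le_one
    linarith
  have hcauchy : ∑ i, (m i : ℝ) * √(Real.log T / (μstar * n i)) ≤
      T * √((k : ℝ) * Real.log T / (μstar * T)) := by
    have hsumR : ∑ i, (m i : ℝ) ≤ T := by exact_mod_cast hsum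
    have hℓkR : (ℓ : ℝ) ≤ k := by exact_mod_cast hℓk
    have hbound := sum_mul_sqrt_div_le (m := fun i => (m i : ℝ)) (n := fun i => (n i : ℝ))
      (div_nonneg hlog hμs0.le) (fun i => Nat.cast_nonneg _) hn0
      (fun i => by exact_mod_cast hnm i)
    simp only [div_div, Fintype.card_fin] at hbound
    calc _ ≤ _ := hbound
      _ ≤ √(k * (Real.log T / μstar * T)) := by gcongr
      _ = √((T : ℝ) ^ 2 * ((k : ℝ) * Real.log T / (μstar * T))) := by
        congr 1
        field_simp
      _ = _ := by rw [Real.sqrt_mul (sq_nonneg _), Real.sqrt_sq hT0.le]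
  calc 1 - 8 * c * √((k : ℝ) * Real.log T / (μstar * T))
      ≤ 1 - 8 * c / T * ∑ i, (m i : ℝ) * √(Real.log T / (μstar * n i)) := by
        have hscaled := mul_le_mul_of_nonneg_left hcauchy
          (show 0 ≤ 8 * c / T by rw [hc]; positivity)
        rw [← mul_assoc, div_mul_cancel₀ _ hT0.ne'] at hscaled
        linarith
    _ = 1 - ∑ i, 2 * ((m i : ℝ) / T) * (4 * c * √(Real.log T / (μstar * n i))) := by
        rw [Finset.mul_sum]
        congr 1
        exact Finset.sum_congr rfl fun i _ => by ring
    _ ≤ ∏ i, (1 - 2 * ((m i : ℝ) / T) * (4 * c * √(Real.log T / (μstar * n i)))) :=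
        one_sub_sum_le_prod_one_sub (fun i _ => by have := hx0 i; positivity)
          (fun i _ => hle1 i)
    _ ≤ _ := Finset.prod_le_prod (fun i _ => sub_nonneg.2 (hle1 i)) fun i _ =>
        one_sub_two_mul_le_one_sub_rpow (hx0 i) (hx i) (by positivity) (hmT i)
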